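/- arXiv:math/0407086 — 2 statements merged into one kernel-verified Lean document; each statement's English description precedes it below -/
import Mathlib

section
/- Let σ be an antisymmetric bilinear form on ℤ^n whose matrix Σ = (σ_ij) arises from an ideal triangulation of a surface of genus g with p punctures (so n = 6g + 3p - 6). Then σ is equivalent over ℤ to the block diagonal form consisting of g blocks [[0,-2],[2,0]], k = 2g + p - 3 blocks [[0,-1],[1,0]], and p blocks (0). -/
/-- A combinatorial model (oriented combinatorial map) of an ideal triangulation of a closed
orientable surface of genus `g` with `p` punctures, having `n` edges.  The darts `D` are the
corners (spikes) of the triangles; `φ` is the rotation moving counterclockwise to the next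
corner of the same triangle (faces are triangles), `α` is the fixed-point-free involution
pairing the two sides of each edge, `edge` labels each dart by the edge of the triangulation
on its left, and `vert` records the puncture towards which the spike converges (orbits of the
vertex rotation `φ ∘ α`).  Connectivity and the Euler relation `p - n + F = 2 - 2g` make this
the triangulation of the genus `g` surface with `p` punctures. -/
structure IdealTriangulation (g p n : ℕ) where
  D : Type
  [fintypeD : Fintype D]
  [decEqD : DecidableEq D]
  α : Equiv.Perm D
  φ : Equiv.Perm D
  α_invol : ∀ d, α (α d) = d
  α_fpf : ∀ d, α d ≠ d
  φ_triangles : ∀ d, φ (φ (φ d)) = d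
  φ_fpf : ∀ d, φ d ≠ d
  edge : D → Fin n
  edge_surj : Function.Surjective edge
  edge_fiber : ∀ d d', edge d = edge d' ↔ (d' = d ∨ d' = α d)
  vert : D → Fin p
  vert_surj : Function.Surjective vert
  vert_rot : ∀ d, vert (φ (α d)) = vert d
  vert_orbit : ∀ d d', vert d = vert d' → ∃ k : ℕ, ((α.trans φ) ^ k) d = d'
  connected : ∀ d d', ∃ w ∈ Subgroup.closure ({α, φ} : Set (Equiv.Perm D)), w d = d'
  card_darts : Fintype.card D = 2 * n
  euler : (p : ℤ) - (n : ℤ) + (Fintype.card D : ℤ) / 3 = 2 - 2 * (g : ℤ)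

attribute [instance] IdealTriangulation.fintypeD IdealTriangulation.decEqD

/-- The number `a_ij` of spikes delimited on the left by edge `i` and on the right by
edge `j`. -/
noncomputable def IdealTriangulation.spikeCount {g p n : ℕ} (T : IdealTriangulation g p n)
    (i j : Fin n) : ℕ :=
  (Finset.univ.filter (fun d => T.edge d = i ∧ T.edge (T.φ d) = j)).card

/-- The Weil–Petersson matrix `σ_ij = a_ij - a_ji` of an ideal triangulation. -/
noncomputable def IdealTriangulation.wpMatrix {g p n : ℕ} (T : IdealTriangulation g p n) :
    Matrix (Fin n) (Fin n) ℤ :=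
  Matrix.of fun i j => (T.spikeCount i j : ℤ) - (T.spikeCount j i : ℤ)

/-- The block diagonal antisymmetric form with `g` blocks `[[0,-2],[2,0]]`, `k` blocks
`[[0,-1],[1,0]]` and the remaining diagonal entries `0`. -/
def wpBlockForm (g k n : ℕ) : Matrix (Fin n) (Fin n) ℤ :=
  Matrix.of fun i j =>
    if i.val < 2 * g ∧ j.val < 2 * g then
      (if j.val = i.val + 1 ∧ i.val % 2 = 0 then -2
       else if i.val = j.val + 1 ∧ j.val % 2 = 0 then 2 else 0)
    else if 2 * g ≤ i.val ∧ i.val < 2 * g + 2 * k ∧ 2 * g ≤ j.val ∧ j.val < 2 * g + 2 * k then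
      (if j.val = i.val + 1 ∧ i.val % 2 = 0 then -1
       else if i.val = j.val + 1 ∧ j.val % 2 = 0 then 1 else 0)
    else 0

open Module Matrix

def J0 (k l : Fin 2) : ℤ := (k.val : ℤ) - l.val

theorem alt_split {V : Type} [AddCommGroup V] (B : V →ₗ[ℤ] V →ₗ[ℤ] ℤ)
    (hB : B.IsAlt) (u v : V) (m : ℤ) (hm : 0 < m) (huv : B v u = m)
    (hu : ∀ w, m ∣ B u w) (hv : ∀ w, m ∣ B v w) :
    ∃ (W : Submodule ℤ V) (e : ((Fin 2 → ℤ) × W) ≃ₗ[ℤ] V),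
      (∀ a w, e (a, w) = a 0 • u + a 1 • v + w) ∧ (∀ w ∈ W, B u w = 0 ∧ B v w = 0) := by
  classical
  have hvu : B u v = -m := by rw [← huv]; exact (hB.neg u v).symm ▸ by simp [← hB.neg v u]
  have huu : B u u = 0 := hB u
  have hvv : B v v = 0 := hB v
  let W : Submodule ℤ V := LinearMap.ker (B u) ⊓ LinearMap.ker (B v)
  let f : ((Fin 2 → ℤ) × W) →ₗ[ℤ] V :=
    { toFun := fun x => x.1 0 • u + x.1 1 • v + x.2
      map_add' := by intro x y; simp [add_smul]; abel
      map_smul' := by intro c x; simp [smul_smul] }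
  have hf : ∀ a w, f (a, w) = a 0 • u + a 1 • v + w := fun a w => rfl
  have hbij : Function.Bijective f := by
    constructor
    · rw [← LinearMap.ker_eq_bot, LinearMap.ker_eq_bot']
      rintro ⟨a, w, hw⟩ h
      rw [hf] at h
      obtain ⟨h1, h2⟩ := hw
      simp only [SetLike.mem_coe, LinearMap.mem_ker] at h1 h2
      have e1 := congrArg (B u) h
      have e2 := congrArg (B v) h
      simp [huu, hvv, huv, hvu, h1, h2, hm.ne'] at e1 e2
      have : w = 0 := by simpa [e1, e2] using h
      ext i
      · fin_cases i <;> simp [e1, e2]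
      · simp [this]
    · intro x
      obtain ⟨s, hs⟩ := hu x
      obtain ⟨t, ht⟩ := hv x
      refine ⟨(![t, -s], ⟨x - t • u + s • v, ?_, ?_⟩), ?_⟩
      · simp [huu, hvu, hs]; ring
      · simp [hvv, huv, ht]; ring
      · rw [hf]; simp; abel
  exact ⟨W, LinearEquiv.ofBijective f hbij, hf, fun w hw => ⟨hw.1, hw.2⟩⟩

theorem alt_normal_form : ∀ (N : ℕ) (V : Type) [AddCommGroup V] [Module.Free ℤ V]
    [Module.Finite ℤ V] (B : V →ₗ[ℤ] V →ₗ[ℤ] ℤ) (_ : B.IsAlt), finrank ℤ V = N →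
    ∃ (I J : Type) (_ : Fintype I) (_ : Fintype J) (_ : DecidableEq I) (d : I → ℤ)
      (b : Basis ((I × Fin 2) ⊕ J) ℤ V), (∀ i, 0 < d i) ∧
      (∀ i k j l, B (b (Sum.inl (i, k))) (b (Sum.inl (j, l))) = if i = j then d i * J0 k l else 0) ∧
      (∀ j x, B (b (Sum.inr j)) x = 0) := by
  intro N
  induction N using Nat.strong_induction_on with
  | _ N ih =>
  intro V _ _ _ B hB hN
  by_cases h0 : B = 0
  · refine ⟨Empty, Fin (finrank ℤ V), inferInstance, inferInstance, inferInstance, Empty.elim,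
      (finBasis ℤ V).reindex (Equiv.emptySum _ _).symm, by simp, by simp, by simp [h0]⟩
  · have hex : ∃ m : ℕ, 0 < m ∧ ∃ u v, B v u = m := by
      by_contra hc
      apply h0
      ext v u
      by_contra hne
      rcases lt_or_gt_of_ne hne with h | h
      · exact hc ⟨(B u v).toNat, by
          have := hB.neg u v
          simp at h ; omega, v, u, by have := hB.neg u v; simp at h; omega⟩
      · exact hc ⟨(B v u).toNat, by simp at h; omega, u, v, by simp at h; omega⟩
    classical
    obtain ⟨hmpos, u, v, huv⟩ := Nat.find_spec hex
    have hmin := fun k => Nat.find_min hex (m := k)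
    set m := Nat.find hex
    have key : ∀ x y : V, (∀ w, ∃ c : ℤ, c = B x w) → B x y = m → ∀ w, (m : ℤ) ∣ B x w := by
      intro x y _ hxy w
      by_contra hnd
      have hpos : 0 ≤ B x w % m := Int.emod_nonneg _ (by omega)
      have hlt : B x w % m < m := Int.emod_lt_of_pos _ (by omega)
      have hne : B x w % m ≠ 0 := fun h => hnd (Int.dvd_of_emod_eq_zero h)
      refine hmin (B x w % m).toNat (by omega) ⟨by omega, w - (B x w / m) • y, x, ?_⟩
      simp only [map_sub, map_smul, hxy, smul_eq_mul]
      rw [Int.toNat_of_nonneg hpos]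
      have := Int.emod_add_mul_ediv (B x w) m
      linarith
    have hv : ∀ w, (m : ℤ) ∣ B v w := key v u (fun w => ⟨_, rfl⟩) huv
    have hu : ∀ w, (m : ℤ) ∣ B u w := by
      have := key u (-v) (fun w => ⟨_, rfl⟩) (by have := hB.neg v u; simp; omega)
      exact this
    obtain ⟨W, e, he, hW⟩ := alt_split B hB u v m (by omega) huv hu hv
    have hfr : finrank ℤ V = 2 + finrank ℤ W := by
      rw [← e.finrank_eq, Module.finrank_prod]; simp
    obtain ⟨I, J, _, _, _, d, b, hd, hb, hbJ⟩ := ih (finrank ℤ W) (by omega) W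
      ((B.domRestrict₁₂ W W)) (fun w => hB w) rfl
    let ε : (Fin 2 ⊕ ((I × Fin 2) ⊕ J)) ≃ ((Option I × Fin 2) ⊕ J) :=
      { toFun := fun x => match x with
          | .inl k => .inl (none, k)
          | .inr (.inl (i, k)) => .inl (some i, k)
          | .inr (.inr j) => .inr j
        invFun := fun x => match x with
          | .inl (none, k) => .inl k
          | .inl (some i, k) => .inr (.inl (i, k))
          | .inr j => .inr (.inr j)
        left_inv := by rintro (k | ⟨i, k⟩ | j) <;> rfl
        right_inv := by rintro (⟨_ | i, k⟩ | j) <;> rfl }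
    let b' := (((Pi.basisFun ℤ (Fin 2)).prod b).map e).reindex ε
    have b0 : ∀ k, b' (Sum.inl (none, k)) = ![u, v] k := by
      intro k
      have : ε.symm (Sum.inl (none, k)) = Sum.inl k := rfl
      simp only [b', Basis.reindex_apply, this, Basis.map_apply, Basis.prod_apply]
      simp only [Sum.elim_inl, Function.comp, LinearMap.inl_apply, he]
      fin_cases k <;> simp
    have b1 : ∀ i k, b' (Sum.inl (some i, k)) = b (Sum.inl (i, k)) := by
      intro i k
      have : ε.symm (Sum.inl (some i, k)) = Sum.inr (Sum.inl (i, k)) := rfl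
      simp only [b', Basis.reindex_apply, this, Basis.map_apply, Basis.prod_apply]
      simp only [Sum.elim_inr, Function.comp, LinearMap.inr_apply, he]
      simp
    have b2 : ∀ j, b' (Sum.inr j) = b (Sum.inr j) := by
      intro j
      have : ε.symm (Sum.inr j) = Sum.inr (Sum.inr j) := rfl
      simp only [b', Basis.reindex_apply, this, Basis.map_apply, Basis.prod_apply]
      simp only [Sum.elim_inr, Function.comp, LinearMap.inr_apply, he]
      simp
    have hW' : ∀ w ∈ W, B w u = 0 ∧ B w v = 0 := by
      intro w hw
      have := hW w hw
      have h1 := hB.neg w u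
      have h2 := hB.neg w v
      constructor <;> omega
    refine ⟨Option I, J, inferInstance, inferInstance, inferInstance,
      fun o => o.elim (m : ℤ) d, b', ?_, ?_, ?_⟩
    · rintro (_ | i)
      · simpa using hmpos
      · exact hd i
    · have hvu := hB.neg v u
      rintro (_ | i) k (_ | j) l
      · rw [b0, b0]
        fin_cases k <;> fin_cases l <;> simp [J0, hB u, hB v, huv] <;> omega
      · rw [b0, b1]
        have := hW _ (b (Sum.inl (j, l))).2
        fin_cases k <;> simp [this]
      · rw [b0, b1]
        have := hW' _ (b (Sum.inl (i, k))).2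
        fin_cases l <;> simp [this]
      · rw [b1, b1]
        have := hb i k j l
        simp only [LinearMap.domRestrict₁₂_apply] at this
        simpa using this
    · intro j x
      rw [b2]
      obtain ⟨⟨a, w⟩, rfl⟩ := e.surjective x
      rw [he]
      have := hW' _ (b (Sum.inr j)).2
      have h3 := hbJ j w
      simp only [LinearMap.domRestrict₁₂_apply] at h3
      simp [this, h3]

theorem z3_a : (2 : ZMod 3) ≠ 0 := by decide
theorem z3_b : (2 : ZMod 3) * 2 = 1 := by decide

namespace IdealTriangulation
variable {g p n : ℕ} (T : IdealTriangulation g p n)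

theorem fiber_sum {K : Type} [CommRing K] (G : T.D → K) (d : T.D) :
    (∑ d', if T.edge d' = T.edge d then G d' else 0) = G d + G (T.α d) := by
  classical
  rw [← Finset.sum_filter]
  have : (Finset.univ.filter fun d' => T.edge d' = T.edge d) = {d, T.α d} := by
    ext d'
    rw [Finset.mem_filter, eq_comm, T.edge_fiber]; simp
  rw [this, Finset.sum_pair (T.α_fpf d).symm]

theorem edge_α (d : T.D) : T.edge (T.α d) = T.edge d :=
  ((T.edge_fiber d (T.α d)).2 (Or.inr rfl)).symm

theorem wp_mulVec {K : Type} [CommRing K] (x : Fin n → K) (d : T.D) :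
    (T.wpMatrix.map (Int.castRingHom K) *ᵥ x) (T.edge d) =
      (x (T.edge (T.φ d)) - x (T.edge (T.φ (T.φ d)))) +
      (x (T.edge (T.φ (T.α d))) - x (T.edge (T.φ (T.φ (T.α d))))) := by
  classical
  rw [← T.fiber_sum (fun d => x (T.edge (T.φ d)) - x (T.edge (T.φ (T.φ d)))) d]
  have h1 : ∀ i j, ((T.spikeCount i j : ℤ) : K) =
      ∑ d, if T.edge d = i ∧ T.edge (T.φ d) = j then (1 : K) else 0 := by
    intro i j
    simp [spikeCount]
  simp only [Matrix.mulVec, dotProduct, Matrix.map_apply, wpMatrix, Matrix.of_apply]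
  simp only [map_sub, eq_intCast, h1, sub_mul, Finset.sum_sub_distrib, Finset.sum_mul]
  have e1 : ∀ i, ∑ j, ∑ d, (if T.edge d = i ∧ T.edge (T.φ d) = j then (1 : K) else 0) * x j =
      ∑ d, if T.edge d = i then x (T.edge (T.φ d)) else 0 := by
    intro i
    rw [Finset.sum_comm]
    refine Finset.sum_congr rfl fun d _ => ?_
    by_cases h : T.edge d = i <;> simp [h]
  have e2 : ∀ i, ∑ j, ∑ d, (if T.edge d = j ∧ T.edge (T.φ d) = i then (1 : K) else 0) * x j =
      ∑ d, if T.edge d = i then x (T.edge (T.φ (T.φ d))) else 0 := by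
    intro i
    rw [Finset.sum_comm]
    rw [← Equiv.sum_comp (T.φ.trans T.φ)]
    refine Finset.sum_congr rfl fun d _ => ?_
    by_cases h : T.edge d = i <;> simp [h, T.φ_triangles]
  rw [e1, e2, ← Finset.sum_sub_distrib]
  refine Finset.sum_congr rfl fun d' _ => ?_
  split_ifs <;> simp

/-- (twice) the corner coordinate -/
def corner {K : Type} [CommRing K] (x : Fin n → K) (d : T.D) : K :=
  x (T.edge d) + x (T.edge (T.φ (T.φ d))) - x (T.edge (T.φ d))

theorem wp_corner {K : Type} [CommRing K] (x : Fin n → K) (d : T.D) :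
    (T.wpMatrix.map (Int.castRingHom K) *ᵥ x) (T.edge d) =
      T.corner x (T.φ (T.α d)) - T.corner x d := by
  rw [wp_mulVec]; simp only [corner, T.φ_triangles, T.edge_α]; ring

theorem corner_add {K : Type} [CommRing K] (x : Fin n → K) (d : T.D) :
    T.corner x d + T.corner x (T.φ d) = 2 * x (T.edge d) := by
  simp only [corner, T.φ_triangles]; ring

theorem vert_φ (d : T.D) : T.vert (T.φ d) = T.vert (T.α d) := by
  rw [← T.vert_rot (T.α d), T.α_invol]

/-- function constant on vertex orbits -/
theorem exists_vert {X : Type} (c : T.D → X) (h : ∀ d, c (T.φ (T.α d)) = c d) :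
    ∃ v : Fin p → X, ∀ d, c d = v (T.vert d) := by
  choose s hs using T.vert_surj
  refine ⟨fun q => c (s q), fun d => ?_⟩
  obtain ⟨k, hk⟩ := T.vert_orbit (s (T.vert d)) d (hs _)
  have : ∀ (k : ℕ) d, c (((T.α.trans T.φ) ^ k) d) = c d := by
    intro k
    induction k with
    | zero => intro d; rfl
    | succ k ih => intro d; rw [pow_succ, Equiv.Perm.mul_apply, ih]; exact h d
  change _ = c (s (T.vert d))
  rw [← this k (s (T.vert d)), hk]

theorem const_of_inv {X : Type} (c : T.D → X) (hα : ∀ d, c (T.α d) = c d)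
    (hφ : ∀ d, c (T.φ d) = c d) (d d' : T.D) : c d = c d' := by
  obtain ⟨w, hw, rfl⟩ := T.connected d d'
  have : ∀ d, c (w d) = c d := by
    induction hw using Subgroup.closure_induction with
    | mem x hx =>
      rcases hx with rfl | rfl
      · exact hα
      · exact hφ
    | one => intro d; rfl
    | mul x y _ _ hx hy => intro d; rw [Equiv.Perm.mul_apply, hx, hy]
    | inv x _ hx => intro d; rw [← hx (x⁻¹ d)]; simp
  exact (this d).symm

/-- edge function from vertex function -/
theorem exists_edgeFun {K : Type} [CommRing K] (v : Fin p → K) :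
    ∃ x : Fin n → K, ∀ d, x (T.edge d) = v (T.vert d) + v (T.vert (T.α d)) := by
  choose s hs using T.edge_surj
  refine ⟨fun i => v (T.vert (s i)) + v (T.vert (T.α (s i))), fun d => ?_⟩
  rcases (T.edge_fiber d _).1 (hs (T.edge d)).symm with h | h
  · simp only [h]
  · simp only [h, T.α_invol]; ring

theorem corner_edgeFun {K : Type} [CommRing K] (v : Fin p → K) (x : Fin n → K)
    (hx : ∀ d, x (T.edge d) = v (T.vert d) + v (T.vert (T.α d))) (d : T.D) :
    T.corner x d = 2 * v (T.vert d) := by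
  have h3 : T.vert (T.φ (T.φ (T.φ d))) = T.vert d := by rw [T.φ_triangles]
  simp only [corner, hx, ← T.vert_φ, h3]; ring

theorem wp_edgeFun {K : Type} [CommRing K] (v : Fin p → K) (x : Fin n → K)
    (hx : ∀ d, x (T.edge d) = v (T.vert d) + v (T.vert (T.α d))) :
    T.wpMatrix.map (Int.castRingHom K) *ᵥ x = 0 := by
  ext i
  obtain ⟨d, rfl⟩ := T.edge_surj i
  rw [T.wp_corner, T.corner_edgeFun v x hx, T.corner_edgeFun v x hx, T.vert_rot]; simp

theorem torsion_two (z : Fin n → ℤ) (N : ℤ) (h : ∀ i, N ∣ (T.wpMatrix *ᵥ z) i) :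
    ∃ y : Fin n → ℤ, (2 : ℤ) • (T.wpMatrix *ᵥ z) = N • (T.wpMatrix *ᵥ y) := by
  have hid : T.wpMatrix.map (Int.castRingHom ℤ) = T.wpMatrix := by ext; simp
  have h1 : ∀ d, ((T.corner z (T.φ (T.α d)) : ℤ) : ZMod N.natAbs) = (T.corner z d : ℤ) := by
    intro d
    have := T.wp_corner z d
    rw [hid] at this
    have h2 := h (T.edge d)
    rw [this] at h2
    rw [← sub_eq_zero, ← Int.cast_sub, ZMod.intCast_zmod_eq_zero_iff_dvd]
    simpa using h2
  obtain ⟨v, hv⟩ := T.exists_vert (fun d => ((T.corner z d : ℤ) : ZMod N.natAbs)) h1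
  choose v' hv' using fun q => ZMod.intCast_surjective (v q)
  obtain ⟨x, hx⟩ := T.exists_edgeFun v'
  have h3 : ∀ i, N ∣ 2 * z i - x i := by
    intro i
    obtain ⟨d, rfl⟩ := T.edge_surj i
    rw [← Int.natAbs_dvd, ← ZMod.intCast_zmod_eq_zero_iff_dvd, hx, ← T.corner_add]
    push_cast
    have a := hv d
    have b := hv (T.φ d)
    rw [a, b, hv', hv', T.vert_φ]; ring
  choose y hy using h3
  refine ⟨y, ?_⟩
  have h4 : (2 : ℤ) • z = x + N • y := by
    ext i; have := hy i; simp; linarith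
  rw [← Matrix.mulVec_smul, h4, Matrix.mulVec_add, Matrix.mulVec_smul]
  have := T.wp_edgeFun v' x hx
  rw [hid] at this
  rw [this, zero_add]

theorem rank_three : (T.wpMatrix.map (Int.castRingHom (ZMod 3))).rank + p = n := by
  have : Fact (Nat.Prime 3) := ⟨by norm_num⟩
  set M := T.wpMatrix.map (Int.castRingHom (ZMod 3)) with hM
  have h := LinearMap.finrank_range_add_finrank_ker M.mulVecLin
  rw [Module.finrank_fin_fun] at h
  have hk : Module.finrank (ZMod 3) (LinearMap.ker M.mulVecLin) = p := by
    choose s hs using T.edge_surj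
    let f : (Fin p → ZMod 3) →ₗ[ZMod 3] (Fin n → ZMod 3) :=
      { toFun := fun v i => v (T.vert (s i)) + v (T.vert (T.α (s i)))
        map_add' := by intro v w; ext i; simp; ring
        map_smul' := by intro c v; ext i; simp; ring }
    have hf : ∀ v d, f v (T.edge d) = v (T.vert d) + v (T.vert (T.α d)) := by
      intro v d
      change v (T.vert (s _)) + v (T.vert (T.α (s _))) = _
      rcases (T.edge_fiber d _).1 (hs (T.edge d)).symm with h | h
      · simp only [h]
      · simp only [h, T.α_invol]; ring
    have hinj : Function.Injective f := by
      intro v w hvw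
      ext q
      obtain ⟨d, rfl⟩ := T.vert_surj q
      have a := T.corner_edgeFun v _ (hf v) d
      rw [hvw, T.corner_edgeFun w _ (hf w) d] at a
      have h2 : (2 : ZMod 3) ≠ 0 := z3_a
      exact (mul_left_cancel₀ h2 a).symm
    have hr : LinearMap.range f = LinearMap.ker M.mulVecLin := by
      apply le_antisymm
      · rintro _ ⟨v, rfl⟩
        exact T.wp_edgeFun v _ (hf v)
      · intro x hx
        have hx' : M *ᵥ x = 0 := hx
        obtain ⟨v, hv⟩ := T.exists_vert (T.corner x) (fun d => by
          have := T.wp_corner x d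
          rw [← hM, hx'] at this
          exact (sub_eq_zero.1 this.symm))
        refine ⟨fun q => 2 * v q, ?_⟩
        ext i
        obtain ⟨d, rfl⟩ := T.edge_surj i
        rw [hf, ← T.vert_φ, ← mul_add, ← hv, ← hv, T.corner_add, ← mul_assoc]
        have : (2 : ZMod 3) * 2 = 1 := z3_b
        rw [this, one_mul]
    rw [← hr, LinearMap.finrank_range_of_inj hinj, Module.finrank_fin_fun]
  rw [hk] at h
  exact h

/-- faces -/
def faceSetoid : Setoid T.D where
  r d d' := d' = d ∨ d' = T.φ d ∨ d' = T.φ (T.φ d)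
  iseqv := by
    refine ⟨fun d => Or.inl rfl, ?_, ?_⟩
    · rintro d _ (rfl | rfl | rfl) <;> simp [T.φ_triangles]
    · rintro d _ _ (rfl | rfl | rfl) (rfl | rfl | rfl) <;> simp [T.φ_triangles]

abbrev Face := Quotient T.faceSetoid
def face (d : T.D) : T.Face := Quotient.mk T.faceSetoid d

noncomputable instance : Fintype T.Face := by classical exact Fintype.ofFinite _
noncomputable instance : DecidableEq T.Face := Classical.decEq _

theorem face_eq (d d' : T.D) : T.face d = T.face d' ↔ d' = d ∨ d' = T.φ d ∨ d' = T.φ (T.φ d) :=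
  Quotient.eq (r := T.faceSetoid)

theorem face_φ (d : T.D) : T.face (T.φ d) = T.face d :=
  ((T.face_eq _ _).2 (Or.inr (Or.inl rfl))).symm

theorem face_sum {K : Type} [CommRing K] (G : T.D → K) (d : T.D) :
    (∑ d', if T.face d' = T.face d then G d' else 0) = G d + G (T.φ d) + G (T.φ (T.φ d)) := by
  classical
  rw [← Finset.sum_filter]
  have : (Finset.univ.filter fun d' => T.face d' = T.face d) = {d, T.φ d, T.φ (T.φ d)} := by
    ext d'
    rw [Finset.mem_filter, eq_comm, T.face_eq]; simp
  have h1 := T.φ_fpf d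
  have h2 := T.φ_fpf (T.φ d)
  have h3 : d ≠ T.φ (T.φ d) := by
    intro h
    have := congrArg T.φ h
    rw [T.φ_triangles] at this
    exact h1 this
  rw [this, Finset.sum_insert, Finset.sum_pair h2.symm]
  · ring
  · simp [h1.symm, h3]

theorem card_face : Fintype.card T.D = 3 * Fintype.card T.Face := by
  classical
  have h := Finset.card_eq_sum_card_fiberwise (f := T.face) (s := Finset.univ)
    (t := Finset.univ) (by intro x _; simp)
  have h2 : ∀ q : T.Face, (Finset.univ.filter fun d' => T.face d' = q).card = 3 := by
    intro q
    obtain ⟨d, rfl⟩ := Quotient.exists_rep q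
    have := T.face_sum (fun _ => (1 : ℤ)) d
    simp only [Finset.sum_boole] at this
    have h' : ((Finset.univ.filter fun d' => T.face d' = T.face d).card : ℤ) = 3 := by
      rw [this]; norm_num
    exact_mod_cast h'
  simp only [h2] at h
  simp at h
  rw [h, mul_comm]

noncomputable def inc : Matrix T.Face (Fin n) (ZMod 2) :=
  Matrix.of fun q i => ∑ d, if T.face d = q ∧ T.edge d = i then 1 else 0

theorem inc_mulVec (x : Fin n → ZMod 2) (d : T.D) : (T.inc *ᵥ x) (T.face d) =
    x (T.edge d) + x (T.edge (T.φ d)) + x (T.edge (T.φ (T.φ d))) := by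
  rw [← T.face_sum (fun d => x (T.edge d))]
  simp only [Matrix.mulVec, dotProduct, inc, Matrix.of_apply, Finset.sum_mul]
  rw [Finset.sum_comm]
  refine Finset.sum_congr rfl fun d' _ => ?_
  by_cases h : T.face d' = T.face d <;> simp [h]

theorem inc_transpose_mulVec (s : T.Face → ZMod 2) (d : T.D) :
    (T.inc.transpose *ᵥ s) (T.edge d) = s (T.face d) + s (T.face (T.α d)) := by
  rw [← T.fiber_sum (fun d => s (T.face d))]
  simp only [Matrix.mulVec, dotProduct, inc, Matrix.transpose_apply, Matrix.of_apply,
    Finset.sum_mul]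
  rw [Finset.sum_comm]
  refine Finset.sum_congr rfl fun d' _ => ?_
  by_cases h : T.edge d' = T.edge d <;> simp [h]

theorem rank_inc (d0 : T.D) : T.inc.rank + 1 = Fintype.card T.Face := by
  have : Fact (Nat.Prime 2) := ⟨by norm_num⟩
  rw [← Matrix.rank_transpose]
  have h := LinearMap.finrank_range_add_finrank_ker T.inc.transpose.mulVecLin
  rw [Module.finrank_fintype_fun_eq_card] at h
  have hk : LinearMap.ker T.inc.transpose.mulVecLin =
      Submodule.span (ZMod 2) {(fun _ => 1 : T.Face → ZMod 2)} := by
    ext s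
    rw [Submodule.mem_span_singleton, LinearMap.mem_ker, Matrix.mulVecLin_apply]
    constructor
    · intro hs
      refine ⟨s (T.face d0), ?_⟩
      ext q
      obtain ⟨d, rfl⟩ := Quotient.exists_rep q
      change _ = s (T.face d)
      have := T.const_of_inv (fun d => s (T.face d)) (fun d => by
        have := T.inc_transpose_mulVec s d
        rw [hs] at this
        exact (CharTwo.add_eq_zero.1 this.symm).symm) (fun d => by simp only [T.face_φ]) d0 d
      simpa using this
    · rintro ⟨a, rfl⟩
      ext i
      obtain ⟨d, rfl⟩ := T.edge_surj i
      rw [T.inc_transpose_mulVec]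
      exact CharTwo.add_self_eq_zero _
  have h1 : Module.finrank (ZMod 2) (LinearMap.ker T.inc.transpose.mulVecLin) = 1 := by
    rw [hk]
    apply finrank_span_singleton
    intro h
    have := congrFun h (T.face d0)
    simp at this
  rw [h1] at h
  exact h

theorem rank_two (d0 : T.D) : (T.wpMatrix.map (Int.castRingHom (ZMod 2))).rank + 2 =
    Fintype.card T.Face := by
  have : Fact (Nat.Prime 2) := ⟨by norm_num⟩
  have hi := T.rank_inc d0
  set M := T.wpMatrix.map (Int.castRingHom (ZMod 2)) with hM
  have h := LinearMap.finrank_range_add_finrank_ker M.mulVecLin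
  have h' := LinearMap.finrank_range_add_finrank_ker T.inc.mulVecLin
  rw [Module.finrank_fin_fun] at h h'
  have hc : ∀ x d, T.corner x d = (T.inc *ᵥ x) (T.face d) := by
    intro x d
    rw [T.inc_mulVec, corner, CharTwo.sub_eq_add]; ring
  have hone : ∀ d, T.corner (fun _ => (1 : ZMod 2)) d = 1 := by
    intro d; simp [corner]
  have hk : LinearMap.ker M.mulVecLin = LinearMap.ker T.inc.mulVecLin ⊔
      Submodule.span (ZMod 2) {(fun _ => 1 : Fin n → ZMod 2)} := by
    apply le_antisymm
    · intro x hx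
      have hx' : M *ᵥ x = 0 := hx
      have hrot : ∀ d, T.corner x (T.φ (T.α d)) = T.corner x d := fun d => by
          have := T.wp_corner x d
          rw [← hM, hx'] at this
          exact (sub_eq_zero.1 this.symm)
      have hφ : ∀ d, T.corner x (T.φ d) = T.corner x d := fun d => by
        rw [hc, hc, T.face_φ]
      have hcon := T.const_of_inv (T.corner x) (fun d => by rw [← hφ, hrot]) hφ
      refine Submodule.mem_sup.2 ⟨x - T.corner x d0 • (fun _ => 1), ?_,
        T.corner x d0 • (fun _ => 1), Submodule.smul_mem _ _ (Submodule.mem_span_singleton_self _),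
        by simp⟩
      rw [LinearMap.mem_ker, Matrix.mulVecLin_apply, Matrix.mulVec_sub, Matrix.mulVec_smul]
      ext q
      obtain ⟨d, rfl⟩ := Quotient.exists_rep q
      change (T.inc *ᵥ x) (T.face d) - T.corner x d0 * (T.inc *ᵥ _) (T.face d) = 0
      rw [← hc, ← hc, hone, mul_one, hcon d d0, sub_self]
    · rw [sup_le_iff, Submodule.span_singleton_le_iff_mem]
      constructor
      · intro x hx
        have hx' : T.inc *ᵥ x = 0 := hx
        change M *ᵥ x = 0
        ext i
        obtain ⟨d, rfl⟩ := T.edge_surj i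
        rw [hM, T.wp_corner, hc, hc, hx']; simp
      · change M *ᵥ _ = 0
        ext i
        obtain ⟨d, rfl⟩ := T.edge_surj i
        rw [hM, T.wp_corner, hone, hone]; simp
  have hd : LinearMap.ker T.inc.mulVecLin ⊓
      Submodule.span (ZMod 2) {(fun _ => 1 : Fin n → ZMod 2)} = ⊥ := by
    rw [eq_bot_iff]
    rintro x ⟨h1, h2⟩
    obtain ⟨a, rfl⟩ := Submodule.mem_span_singleton.1 h2
    have h1' : T.inc *ᵥ (a • (fun _ => 1 : Fin n → ZMod 2)) = 0 := h1
    have := congrFun h1' (T.face d0)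
    rw [Matrix.mulVec_smul, Pi.smul_apply, ← hc, hone] at this
    simp at this
    simp [this]
  have hs := Submodule.finrank_sup_add_finrank_inf_eq (LinearMap.ker T.inc.mulVecLin)
    (Submodule.span (ZMod 2) {(fun _ => 1 : Fin n → ZMod 2)})
  have h1 : Module.finrank (ZMod 2)
      (Submodule.span (ZMod 2) {(fun _ => 1 : Fin n → ZMod 2)}) = 1 := by
    apply finrank_span_singleton
    intro h
    have := congrFun h (T.edge d0)
    simp at this
  rw [hd, ← hk, h1, finrank_bot] at hs
  have hr : T.inc.rank = Module.finrank (ZMod 2) (LinearMap.range T.inc.mulVecLin) := rfl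
  have hr' : M.rank = Module.finrank (ZMod 2) (LinearMap.range M.mulVecLin) := rfl
  omega

end IdealTriangulation

theorem z3_c : ((1 : ℤ) : ZMod 3) ≠ 0 := by decide
theorem z3_d : ((2 : ℤ) : ZMod 3) ≠ 0 := by decide
theorem z2_a : ((1 : ℤ) : ZMod 2) ≠ 0 ↔ ¬ (1 : ℤ) = 2 := by decide
theorem z2_b : ((2 : ℤ) : ZMod 2) ≠ 0 ↔ ¬ (2 : ℤ) = 2 := by decide

set_option maxHeartbeats 2000000

theorem rank_of_normal {n : ℕ} (S : Matrix (Fin n) (Fin n) ℤ) {I J : Type} [Fintype I] [Fintype J]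
    [DecidableEq I] (d : I → ℤ) (b : Basis ((I × Fin 2) ⊕ J) ℤ (Fin n → ℤ))
    (hb : ∀ i k j l, b (Sum.inl (i, k)) ⬝ᵥ (S *ᵥ b (Sum.inl (j, l))) =
      if i = j then d i * J0 k l else 0)
    (hJ : ∀ j x, b (Sum.inr j) ⬝ᵥ (S *ᵥ x) = 0) (hJ' : ∀ j x, x ⬝ᵥ (S *ᵥ b (Sum.inr j)) = 0)
    (q : ℕ) [Fact q.Prime] :
    (S.map (Int.castRingHom (ZMod q))).rank = 2 * Fintype.card {i // (d i : ZMod q) ≠ 0} := by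
  classical
  let ε : ((I × Fin 2) ⊕ J) ≃ Fin n := b.indexEquiv (Pi.basisFun ℤ (Fin n))
  let b' := b.reindex ε
  let A : Matrix (Fin n) (Fin n) ℤ := Matrix.of fun i => b' i
  have hA : IsUnit A.det := by
    have h := (Pi.basisFun ℤ (Fin n)).isUnit_det b'
    rw [Basis.det_apply] at h
    have : (Pi.basisFun ℤ (Fin n)).toMatrix b' = A.transpose := by
      ext i j; simp [Basis.toMatrix_apply, A]
    rwa [this, Matrix.det_transpose] at h
  let N : Matrix ((I × Fin 2) ⊕ J) ((I × Fin 2) ⊕ J) ℤ :=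
    Matrix.of fun x y => b x ⬝ᵥ (S *ᵥ b y)
  have hAN : (A * S * A.transpose) = N.submatrix ε.symm ε.symm := by
    ext i j
    rw [Matrix.mul_assoc]
    simp [N, A, b', Matrix.mul_apply, dotProduct, Matrix.mulVec]
  let sw : ((I × Fin 2) ⊕ J) ≃ ((I × Fin 2) ⊕ J) :=
    Equiv.sumCongr (Equiv.prodCongr (Equiv.refl I) (Equiv.swap 0 1)) (Equiv.refl J)
  let w : ((I × Fin 2) ⊕ J) → ZMod q :=
    Sum.elim (fun x => (d x.1 : ZMod q) * (if x.2 = 0 then -1 else 1)) 0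
  have hw : (N.map (Int.castRingHom (ZMod q))).submatrix (Equiv.refl _) sw =
      Matrix.diagonal w := by
    ext x y
    rcases x with ⟨i, k⟩ | x
    · rcases y with ⟨j, l⟩ | y
      · have : sw (Sum.inl (j, l)) = Sum.inl (j, Equiv.swap 0 1 l) := rfl
        simp only [Matrix.submatrix_apply, this, Matrix.map_apply, N, Matrix.of_apply,
          Equiv.refl_apply, hb]
        by_cases hij : i = j
        · subst hij
          fin_cases k <;> fin_cases l <;> simp [J0, w, Matrix.diagonal]
        · simp [hij, Matrix.diagonal]
      · have : sw (Sum.inr y) = Sum.inr y := rfl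
        simp [N, this, hJ']
    · simp only [Matrix.submatrix_apply, Matrix.map_apply, N, Matrix.of_apply,
          Equiv.refl_apply, hJ]
      simp [Matrix.diagonal, w]
  have hA1 : IsUnit (A.map (Int.castRingHom (ZMod q))).det := by
    have := hA.map (Int.castRingHom (ZMod q))
    rwa [RingHom.map_det] at this
  have e1 : ((A * S * A.transpose).map (Int.castRingHom (ZMod q))).rank =
      (S.map (Int.castRingHom (ZMod q))).rank := by
    rw [Matrix.map_mul, Matrix.map_mul, Matrix.rank_mul_eq_left_of_isUnit_det,
      Matrix.rank_mul_eq_right_of_isUnit_det _ _ hA1]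
    rw [Matrix.transpose_map, Matrix.det_transpose]; exact hA1
  rw [← e1, hAN, ← Matrix.submatrix_map, Matrix.rank_submatrix,
    ← Matrix.rank_submatrix _ (Equiv.refl _) sw, hw, Matrix.rank_diagonal]
  have e2 : {x // w x ≠ 0} ≃ ({i // (d i : ZMod q) ≠ 0} × Fin 2) :=
    { toFun := fun x => match x with
        | ⟨.inl (i, k), h⟩ => (⟨i, fun h0 => h (by simp [w, h0])⟩, k)
        | ⟨.inr j, h⟩ => absurd rfl h
      invFun := fun y => ⟨.inl (y.1.1, y.2), by
        have := y.1.2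
        simp only [w, Sum.elim_inl]
        split_ifs <;> simpa using this⟩
      left_inv := by
        rintro ⟨⟨i, k⟩ | j, h⟩
        · rfl
        · exact absurd rfl h
      right_inv := by rintro ⟨⟨i, h⟩, k⟩; rfl }
  rw [Fintype.card_congr e2, Fintype.card_prod, Fintype.card_fin, mul_comm]

/-- The antisymmetric bilinear form `σ` on `ℤⁿ` (`n = 6g + 3p - 6`) of an ideal
triangulation of a genus `g` surface with `p` punctures is equivalent over `ℤ` to the block
diagonal form consisting of `g` blocks `[[0,-2],[2,0]]`, `k = 2g + p - 3` blocks
`[[0,-1],[1,0]]`, and `p` blocks `(0)`. -/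
theorem wpMatrix_equivalent_blockForm (g p n : ℕ) (hp : 1 ≤ p) (hn : (n : ℤ) = 6 * g + 3 * p - 6)
    (T : IdealTriangulation g p n) :
    ∃ A : Matrix (Fin n) (Fin n) ℤ, IsUnit A.det ∧
      wpBlockForm g (2 * g + p - 3) n = A * T.wpMatrix * A.transpose := by 
  classical
  have : Fact (Nat.Prime 2) := ⟨by norm_num⟩
  have : Fact (Nat.Prime 3) := ⟨by norm_num⟩
  obtain ⟨d0, -⟩ := T.vert_surj ⟨0, hp⟩
  set S := T.wpMatrix with hS
  have hST : S.transpose = -S := by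
    ext i j; simp [hS, IdealTriangulation.wpMatrix]
  let B : (Fin n → ℤ) →ₗ[ℤ] (Fin n → ℤ) →ₗ[ℤ] ℤ := Matrix.toLinearMap₂' ℤ S
  have hBa : ∀ x y, B x y = x ⬝ᵥ (S *ᵥ y) := fun x y => Matrix.toLinearMap₂'_apply' S x y
  have hanti : ∀ x y, x ⬝ᵥ (S *ᵥ y) = - (y ⬝ᵥ (S *ᵥ x)) := by
    intro x y
    rw [Matrix.dotProduct_mulVec, ← Matrix.mulVec_transpose, hST, dotProduct_comm,
      Matrix.neg_mulVec, dotProduct_neg]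
  have hB : B.IsAlt := by
    intro x
    have := hanti x x
    rw [hBa]; omega
  obtain ⟨I, J, _, _, _, d, b, hd, hb, hbJ⟩ := alt_normal_form _ _ B hB rfl
  simp only [hBa] at hb hbJ
  have hbJ' : ∀ j x, x ⬝ᵥ (S *ᵥ b (Sum.inr j)) = 0 := by
    intro j x; rw [hanti, hbJ, neg_zero]
  have hdiv : ∀ i k w, d i ∣ w ⬝ᵥ (S *ᵥ b (Sum.inl (i, k))) := by
    intro i k w
    rw [← hBa, ← b.sum_repr w, map_sum, LinearMap.sum_apply]
    refine Finset.dvd_sum fun x _ => ?_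
    rw [map_smul, LinearMap.smul_apply, smul_eq_mul, hBa]
    apply Dvd.dvd.mul_left
    rcases x with ⟨j, l⟩ | j
    · rw [hb]
      split_ifs with h
      · subst h; exact dvd_mul_right _ _
      · exact dvd_zero _
    · rw [hbJ]; exact dvd_zero _
  have hd2 : ∀ i, d i = 1 ∨ d i = 2 := by
    intro i
    obtain ⟨y, hy⟩ := T.torsion_two (b (Sum.inl (i, 0))) (d i) (fun j => by
      have := hdiv i 0 (Pi.single j 1)
      simpa using this)
    have h1 := congrArg (fun v => b (Sum.inl (i, 1)) ⬝ᵥ v) hy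
    simp only [dotProduct_smul, ← hS, hb, smul_eq_mul] at h1
    have h2 := hdiv i 1 y
    rw [hanti, dvd_neg] at h2
    have h3 : b (Sum.inl (i, 1)) ⬝ᵥ (S *ᵥ y) = 2 := by
      apply mul_left_cancel₀ (hd i).ne'
      rw [← h1]; simp [J0]; ring
    rw [h3] at h2
    have := Int.le_of_dvd (by norm_num) h2
    have := hd i
    omega
  have r3 := T.rank_three
  have r2 := T.rank_two d0
  have cf := T.card_face
  have cd := T.card_darts
  have eu := T.euler
  rw [← hS, rank_of_normal S d b hb hbJ hbJ'] at r3 r2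
  have c3 : Fintype.card {i // (d i : ZMod 3) ≠ 0} = Fintype.card I := by
    rw [Fintype.card_subtype, Finset.filter_true_of_mem, Finset.card_univ]
    intro i _
    rcases hd2 i with h | h <;> rw [h]
    · exact z3_c
    · exact z3_d
  have c2 : Fintype.card {i // (d i : ZMod 2) ≠ 0} = Fintype.card {i // ¬ d i = 2} := by
    apply Fintype.card_congr
    apply Equiv.subtypeEquivRight
    intro i
    rcases hd2 i with h | h <;> rw [h]
    · exact z2_a
    · exact z2_b
  rw [c3] at r3
  rw [c2] at r2
  have cI : Fintype.card {i // d i = 2} + Fintype.card {i // ¬ d i = 2} = Fintype.card I := by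
    rw [← Fintype.card_sum]; exact Fintype.card_congr (Equiv.sumCompl _)
  have cn : Fintype.card I * 2 + Fintype.card J = n := by
    have := Fintype.card_congr (b.indexEquiv (Pi.basisFun ℤ (Fin n)))
    simpa using this
  obtain ⟨k, hk⟩ : ∃ k, k = 2 * g + p - 3 := ⟨_, rfl⟩
  rw [← hk]
  have hg : Fintype.card {i // d i = 2} = g := by omega
  have hk' : Fintype.card {i // ¬ d i = 2} = k := by omega
  have hp' : Fintype.card J = p := by omega
  have hnn : n = 2 * g + 2 * k + p := by omega
  let e2 := (Fintype.equivFinOfCardEq hg).symm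
  let e1 := (Fintype.equivFinOfCardEq hk').symm
  let eJ := (Fintype.equivFinOfCardEq hp').symm
  have hne : ∀ a c, (e2 a).1 ≠ (e1 c).1 := fun a c h => (e1 c).2 (h ▸ (e2 a).2)
  have hd_1 : ∀ c, d (e1 c).1 = 1 := fun c => (hd2 _).resolve_right (e1 c).2
  have hd_2 : ∀ c, d (e2 c).1 = 2 := fun c => (e2 c).2
  let β : Fin n → ((I × Fin 2) ⊕ J) := fun x =>
    if h : x.val < 2 * g then Sum.inl ((e2 ⟨x.val / 2, by omega⟩).1, ⟨x.val % 2, by omega⟩)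
    else if h2 : x.val < 2 * g + 2 * k then
      Sum.inl ((e1 ⟨(x.val - 2 * g) / 2, by omega⟩).1, ⟨x.val % 2, by omega⟩)
    else Sum.inr (eJ ⟨x.val - 2 * g - 2 * k, by omega⟩)
  have hβ : Function.Injective β := by
    intro x y hxy
    simp only [β] at hxy
    split_ifs at hxy <;>
      simp [Subtype.coe_inj, hne, (hne _ _).symm, Fin.ext_iff] at hxy <;> omega
  have hbij : Function.Bijective β := by
    rw [Fintype.bijective_iff_injective_and_card]
    refine ⟨hβ, ?_⟩
    simp; omega
  let b' := b.reindex (Equiv.ofBijective β hbij).symm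
  have hb' : ∀ x, b' x = b (β x) := by intro x; simp [b']
  let A : Matrix (Fin n) (Fin n) ℤ := Matrix.of fun i => b' i
  refine ⟨A, ?_, ?_⟩
  · have h := (Pi.basisFun ℤ (Fin n)).isUnit_det b'
    rw [Basis.det_apply] at h
    have : (Pi.basisFun ℤ (Fin n)).toMatrix b' = A.transpose := by
      ext i j; simp [Basis.toMatrix_apply, A]
    rwa [this, Matrix.det_transpose] at h
  · ext x y
    have hAN : (A * S * A.transpose) x y = b (β x) ⬝ᵥ (S *ᵥ b (β y)) := by
      rw [← hb', ← hb', Matrix.mul_assoc]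
      simp [A, Matrix.mul_apply, dotProduct, Matrix.mulVec]
    rw [hAN]
    simp only [wpBlockForm, Matrix.of_apply]
    by_cases hx : x.val < 2 * g
    · have bx : β x = Sum.inl ((e2 ⟨x.val / 2, by omega⟩).1, ⟨x.val % 2, by omega⟩) := by
        simp [β, hx]
      by_cases hy : y.val < 2 * g
      · have byy : β y = Sum.inl ((e2 ⟨y.val / 2, by omega⟩).1, ⟨y.val % 2, by omega⟩) := by
          simp [β, hy]
        rw [bx, byy, hb, hd_2]
        simp only [Subtype.coe_inj, EmbeddingLike.apply_eq_iff_eq, Fin.mk.injEq, J0]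
        split_ifs <;> omega
      · by_cases hy2 : y.val < 2 * g + 2 * k
        · have byy : β y = Sum.inl ((e1 ⟨(y.val - 2 * g) / 2, by omega⟩).1,
              ⟨y.val % 2, by omega⟩) := by simp [β, hy, hy2]
          rw [bx, byy, hb, if_neg (hne _ _)]
          split_ifs <;> omega
        · have byy : β y = Sum.inr (eJ ⟨y.val - 2 * g - 2 * k, by omega⟩) := by
            simp [β, hy, hy2]
          rw [byy, hbJ']
          split_ifs <;> omega
    · by_cases hx2 : x.val < 2 * g + 2 * k
      · have bx : β x = Sum.inl ((e1 ⟨(x.val - 2 * g) / 2, by omega⟩).1,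
              ⟨x.val % 2, by omega⟩) := by simp [β, hx, hx2]
        by_cases hy : y.val < 2 * g
        · have byy : β y = Sum.inl ((e2 ⟨y.val / 2, by omega⟩).1, ⟨y.val % 2, by omega⟩) := by
            simp [β, hy]
          rw [bx, byy, hb, if_neg (hne _ _).symm]
          split_ifs <;> omega
        · by_cases hy2 : y.val < 2 * g + 2 * k
          · have byy : β y = Sum.inl ((e1 ⟨(y.val - 2 * g) / 2, by omega⟩).1,
              ⟨y.val % 2, by omega⟩) := by simp [β, hy, hy2]
            rw [bx, byy, hb, hd_1]
            simp only [Subtype.coe_inj, EmbeddingLike.apply_eq_iff_eq, Fin.mk.injEq, J0]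
            split_ifs <;> omega
          · have byy : β y = Sum.inr (eJ ⟨y.val - 2 * g - 2 * k, by omega⟩) := by
              simp [β, hy, hy2]
            rw [byy, hbJ']
            split_ifs <;> omega
      · have bx : β x = Sum.inr (eJ ⟨x.val - 2 * g - 2 * k, by omega⟩) := by
          simp [β, hx, hx2]
        rw [bx, hbJ]
        split_ifs <;> omega
end

section
/- Let q² be a primitive N-th root of unity with N odd. Every irreducible finite-dimensional representation of the Chekhov-Fock algebra 𝒯_λ^q of an ideal triangulation of a genus g surface with p punctures has dimension N^{3g+p-3}. -/
/-- The bilinear Weil–Petersson form `σ(α, β) = Σ_{i,j} α_i σ_ij β_j` on `ℤⁿ`. -/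
noncomputable def IdealTriangulation.wpForm {g p n : ℕ} (T : IdealTriangulation g p n)
    (x y : Fin n → ℤ) : ℤ :=
  ∑ i : Fin n, ∑ j : Fin n, x i * T.wpMatrix i j * y j

/-- `k_{ij} ∈ {0,1,2}` is the number of ends of the edge `λ_j` converging to the `i`-th
puncture. -/
noncomputable def IdealTriangulation.endCount {g p n : ℕ} (T : IdealTriangulation g p n)
    (i : Fin p) (j : Fin n) : ℕ :=
  (Finset.univ.filter (fun d => T.vert d = i ∧ T.edge d = j)).card

/-- The family of `p` vectors generating the kernel of the Weil–Petersson form: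
the vectors `(k_{i1}, …, k_{in})` for `i = 1, …, p-1` together with `(1, 1, …, 1)`. -/
noncomputable def IdealTriangulation.kerGens {g p n : ℕ} (T : IdealTriangulation g p n)
    (i : Fin p) : Fin n → ℤ :=
  if i.val + 1 < p then (fun j => (T.endCount i j : ℤ)) else (fun _ => 1)

open FreeAlgebra in
/-- The defining relations of the quantum torus (Chekhov–Fock algebra): generators
`X_i` (`Sum.inl i`) and their inverses `X_i⁻¹` (`Sum.inr i`), subject to
`X_i X_j = q^(2 σ_ij) X_j X_i` and `X_i X_i⁻¹ = X_i⁻¹ X_i = 1`. -/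
inductive QTRel (n : ℕ) (q : ℂ) (σ : Fin n → Fin n → ℤ) :
    FreeAlgebra ℂ (Fin n ⊕ Fin n) → FreeAlgebra ℂ (Fin n ⊕ Fin n) → Prop
  | comm (i j : Fin n) : QTRel n q σ (ι ℂ (Sum.inl i) * ι ℂ (Sum.inl j))
      ((q ^ (2 * σ i j) : ℂ) • (ι ℂ (Sum.inl j) * ι ℂ (Sum.inl i)))
  | mul_inv (i : Fin n) : QTRel n q σ (ι ℂ (Sum.inl i) * ι ℂ (Sum.inr i)) 1
  | inv_mul (i : Fin n) : QTRel n q σ (ι ℂ (Sum.inr i) * ι ℂ (Sum.inl i)) 1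

/-- The quantum torus `𝒯` with parameters `q` and `σ`: the `ℂ`-algebra generated by
`X_1^{±1}, …, X_n^{±1}` with relations `X_i X_j = q^(2 σ_ij) X_j X_i`. -/
abbrev QuantumTorus (n : ℕ) (q : ℂ) (σ : Fin n → Fin n → ℤ) :=
  RingQuot (QTRel n q σ)

/-- The generator `X_i` of the quantum torus. -/
noncomputable def QuantumTorus.X {n : ℕ} {q : ℂ} {σ : Fin n → Fin n → ℤ} (i : Fin n) :
    QuantumTorus n q σ :=
  RingQuot.mkAlgHom ℂ (QTRel n q σ) (FreeAlgebra.ι ℂ (Sum.inl i))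

/-- The generator `X_i⁻¹` of the quantum torus. -/
noncomputable def QuantumTorus.Xinv {n : ℕ} {q : ℂ} {σ : Fin n → Fin n → ℤ} (i : Fin n) :
    QuantumTorus n q σ :=
  RingQuot.mkAlgHom ℂ (QTRel n q σ) (FreeAlgebra.ι ℂ (Sum.inr i))

/-- `X_i^k` for an integer exponent `k ∈ ℤ`. -/
noncomputable def QuantumTorus.Xzpow {n : ℕ} {q : ℂ} {σ : Fin n → Fin n → ℤ} (i : Fin n)
    (k : ℤ) : QuantumTorus n q σ :=
  if 0 ≤ k then (QuantumTorus.X i) ^ k.toNat else (QuantumTorus.Xinv i) ^ (-k).toNat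

/-- The monomial `X_1^{k_1} X_2^{k_2} ⋯ X_n^{k_n}` of the quantum torus. -/
noncomputable def QuantumTorus.monomial {n : ℕ} {q : ℂ} {σ : Fin n → Fin n → ℤ}
    (k : Fin n → ℤ) : QuantumTorus n q σ :=
  ((List.finRange n).map (fun i => QuantumTorus.Xzpow i (k i))).prod

/-- The Chekhov–Fock algebra `𝒯_λ^q` of an ideal triangulation `λ`: the quantum torus with
skew-commutation exponents given by the Weil–Petersson matrix `σ` of `λ`. -/
noncomputable abbrev ChekhovFock {g p n : ℕ} (T : IdealTriangulation g p n) (q : ℂ) :=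
  QuantumTorus n q (fun i j => T.wpMatrix i j)

/-- A representation `ρ : A → End(V)` is irreducible if `V ≠ 0` and the only invariant
subspaces are `0` and `V`. -/
def IsIrreducibleRep {A V : Type*} [Ring A] [Algebra ℂ A] [AddCommGroup V] [Module ℂ V]
    (ρ : A →ₐ[ℂ] Module.End ℂ V) : Prop :=
  (∃ v : V, v ≠ 0) ∧
    ∀ W : Submodule ℂ V, (∀ (a : A), ∀ w ∈ W, ρ a w ∈ W) → W = ⊥ ∨ W = ⊤

section Helpers

theorem cfaux_schur {A V : Type*} [Ring A] [Algebra ℂ A] [AddCommGroup V] [Module ℂ V]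
    [FiniteDimensional ℂ V] (ρ : A →ₐ[ℂ] Module.End ℂ V) (hρ : IsIrreducibleRep ρ)
    (T : Module.End ℂ V) (hT : ∀ a, T * ρ a = ρ a * T) : ∃ c : ℂ, T = c • 1 := by
  obtain ⟨⟨v, hv⟩, hirr⟩ := hρ
  haveI : Nontrivial V := ⟨⟨v, 0, hv⟩⟩
  obtain ⟨c, hc⟩ := Module.End.exists_eigenvalue T
  refine ⟨c, ?_⟩
  have h := hirr (Module.End.eigenspace T c) (by
    intro a w hw
    rw [Module.End.mem_eigenspace_iff] at hw ⊢
    have := congrArg (fun f : Module.End ℂ V => f w) (hT a)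
    simp only [Module.End.mul_apply] at this
    rw [this, hw, map_smul])
  rcases h with h | h
  · exact absurd h hc
  · ext w
    have : w ∈ Module.End.eigenspace T c := by rw [h]; trivial
    rw [Module.End.mem_eigenspace_iff] at this
    simpa using this

theorem cfaux_burnside {A V : Type*} [Ring A] [Algebra ℂ A] [AddCommGroup V] [Module ℂ V]
    [FiniteDimensional ℂ V] (ρ : A →ₐ[ℂ] Module.End ℂ V) (hρ : IsIrreducibleRep ρ) :
    Function.Surjective ρ := by
  letI : Module A V := Module.compHom V ρ.toRingHom
  have hsm : ∀ (a : A) (v : V), a • v = ρ a v := fun _ _ => rfl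
  haveI : IsScalarTower ℂ A V := ⟨fun c a v => by simp [hsm]⟩
  have hρ' := hρ
  obtain ⟨⟨v, hv⟩, hirr⟩ := hρ'
  haveI : Nontrivial V := ⟨⟨v, 0, hv⟩⟩
  haveI : IsSimpleModule A V := by
    rw [isSimpleModule_iff]
    haveI : Nontrivial (Submodule A V) := inferInstance
    refine ⟨fun W => ?_⟩
    rcases hirr (W.restrictScalars ℂ) (fun a w hw => W.smul_mem a hw) with h | h
    · left
      simpa using h
    · right
      simpa using h
  intro f
  have hc : ∀ g : Module.End A V, ∃ c : ℂ, ∀ v, g v = c • v := by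
    intro g
    obtain ⟨c, hc⟩ := cfaux_schur ρ hρ (g.restrictScalars ℂ) (by
      intro a
      ext w
      exact g.map_smul a w)
    exact ⟨c, fun v => by simpa using congrArg (fun f : Module.End ℂ V => f v) hc⟩
  let f' : Module.End (Module.End A V) V :=
    { toFun := f
      map_add' := f.map_add
      map_smul' := by
        intro g w
        obtain ⟨c, hc⟩ := hc g
        simp [Module.End.smul_def, hc] }
  obtain ⟨s, hs⟩ := Module.Finite.fg_top (R := ℂ) (M := V)
  obtain ⟨r, hr⟩ := jacobson_density (R := A) f' s
  refine ⟨r, ?_⟩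
  refine LinearMap.ext_on (s := (s : Set V)) hs ?_
  intro m hm
  exact (hr m hm).symm

/-- Weight predicate. -/
def cfauxWt {n N : ℕ} {V : Type*} [AddCommGroup V] [Module ℂ V]
    (e : AddChar (ZMod N) ℂ) (U : Fin n → (Module.End ℂ V)ˣ) (c : Fin n → ZMod N)
    (T : Module.End ℂ V) : Prop :=
  ∀ i, T * U i = e (c i) • ((U i : Module.End ℂ V) * T)

section
variable {n N : ℕ} {V : Type*} [AddCommGroup V] [Module ℂ V]
    {e : AddChar (ZMod N) ℂ} {U : Fin n → (Module.End ℂ V)ˣ}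

theorem cfauxWt.mul {c d : Fin n → ZMod N} {S T : Module.End ℂ V}
    (hS : cfauxWt e U c S) (hT : cfauxWt e U d T) : cfauxWt e U (c + d) (S * T) := by
  intro i
  rw [mul_assoc, hT i, mul_smul_comm, ← mul_assoc, hS i, smul_mul_assoc, smul_smul, mul_assoc,
    Pi.add_apply, AddChar.map_add_eq_mul, mul_comm (e (c i))]

theorem cfauxWt.one : cfauxWt e U 0 1 := by
  intro i
  simp

theorem cfauxWt.inv {c : Fin n → ZMod N} {S : (Module.End ℂ V)ˣ}
    (hS : cfauxWt e U c S) : cfauxWt e U (-c) (↑S⁻¹ : Module.End ℂ V) := by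
  intro i
  have h := hS i
  have he : e (-(c i)) * e (c i) = 1 := by
    rw [← AddChar.map_add_eq_mul]; simp
  have h2 : (↑S⁻¹ : Module.End ℂ V) * (S * U i) * (↑S⁻¹ : Module.End ℂ V)
      = e (c i) • ((↑S⁻¹ : Module.End ℂ V) * U i) := by
    rw [h, mul_smul_comm, smul_mul_assoc, mul_assoc, mul_assoc, Units.mul_inv, mul_one]
  rw [← mul_assoc, Units.inv_mul, one_mul] at h2
  rw [h2, smul_smul, Pi.neg_apply, he, one_smul]

theorem cfauxWt.trace_zero [FiniteDimensional ℂ V] (he : ∀ x, e x = 1 → x = 0)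
    {c : Fin n → ZMod N} {S : Module.End ℂ V}
    (hS : cfauxWt e U c S) (hc : c ≠ 0) : LinearMap.trace ℂ V S = 0 := by
  obtain ⟨i, hi⟩ := Function.ne_iff.1 hc
  have h1 : S = e (c i) • ((U i : Module.End ℂ V) * S * (↑(U i)⁻¹ : Module.End ℂ V)) := by
    rw [← smul_mul_assoc, ← hS i, mul_assoc, Units.mul_inv, mul_one]
  have h2 := congrArg (LinearMap.trace ℂ V) h1
  rw [map_smul, LinearMap.trace_mul_comm, ← mul_assoc, Units.inv_mul, one_mul, smul_eq_mul] at h2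
  have h3 : (1 - e (c i)) * LinearMap.trace ℂ V S = 0 := by linear_combination h2
  rcases mul_eq_zero.1 h3 with h | h
  · exact absurd (he _ (by linear_combination -h)) hi
  · exact h

end

theorem cfaux_gen {n : ℕ} {q : ℂ} {σ : Fin n → Fin n → ℤ} {E : Type*} [Ring E] [Algebra ℂ E]
    (ρ : QuantumTorus n q σ →ₐ[ℂ] E) (B : Subalgebra ℂ E)
    (h1 : ∀ i, ρ (QuantumTorus.X i) ∈ B) (h2 : ∀ i, ρ (QuantumTorus.Xinv i) ∈ B) (a) :
    ρ a ∈ B := by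
  obtain ⟨x, rfl⟩ := RingQuot.mkAlgHom_surjective ℂ (QTRel n q σ) a
  induction x using FreeAlgebra.induction with
  | grade0 r => 
    rw [AlgHom.commutes, AlgHom.commutes]
    exact B.algebraMap_mem r
  | grade1 x =>
    rcases x with i | i
    · exact h1 i
    · exact h2 i
  | mul a b ha hb => rw [map_mul, map_mul]; exact B.mul_mem ha hb
  | add a b ha hb => rw [map_add, map_add]; exact B.add_mem ha hb

theorem cfaux_dim {n N : ℕ} [NeZero N] {q : ℂ} {σ : Fin n → Fin n → ℤ}
    (e : AddChar (ZMod N) ℂ) (he : ∀ x, e x = 1 → x = 0)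
    (heq : ∀ k : ℤ, e (k : ZMod N) = q ^ (2 * k))
    {V : Type*} [AddCommGroup V] [Module ℂ V] [FiniteDimensional ℂ V]
    (ρ : QuantumTorus n q σ →ₐ[ℂ] Module.End ℂ V) (hρ : IsIrreducibleRep ρ)
    (L : (Fin n → ZMod N) →+ (Fin n → ZMod N))
    (hL : ∀ x i, L x i = ∑ j, (σ j i : ZMod N) * x j) :
    Module.finrank ℂ V * Module.finrank ℂ V = Nat.card L.range := by
  classical
  let U : Fin n → (Module.End ℂ V)ˣ := fun i =>
    { val := ρ (QuantumTorus.X i)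
      inv := ρ (QuantumTorus.Xinv i)
      val_inv := by
        rw [← map_mul, ← map_one ρ]
        congr 1
        have := RingQuot.mkAlgHom_rel ℂ (QTRel.mul_inv (n := n) (q := q) (σ := σ) i)
        rw [map_mul, map_one] at this
        exact this
      inv_val := by
        rw [← map_mul, ← map_one ρ]
        congr 1
        have := RingQuot.mkAlgHom_rel ℂ (QTRel.inv_mul (n := n) (q := q) (σ := σ) i)
        rw [map_mul, map_one] at this
        exact this }
  have hUX : ∀ i, (U i : Module.End ℂ V) = ρ (QuantumTorus.X i) := fun _ => rfl
  have hUI : ∀ i, (↑(U i)⁻¹ : Module.End ℂ V) = ρ (QuantumTorus.Xinv i) := fun _ => rfl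
  have hUU : ∀ j, cfauxWt e U (L (Pi.single j 1)) (U j) := by
    intro j i
    have h1 : L (Pi.single j 1) i = ((σ j i : ℤ) : ZMod N) := by
      rw [hL, Finset.sum_eq_single j]
      · simp
      · intro b _ hb; simp [hb]
      · simp
    rw [h1, heq, hUX, hUX, ← map_mul, ← map_mul, ← map_smul]
    congr 1
    have := RingQuot.mkAlgHom_rel ℂ (QTRel.comm (n := n) (q := q) (σ := σ) j i)
    rw [map_mul, map_smul, map_mul] at this
    exact this
  -- units of every weight in the range
  let G : AddSubgroup (Fin n → ZMod N) :=
    { carrier := {x | ∃ M : (Module.End ℂ V)ˣ, cfauxWt e U (L x) M}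
      zero_mem' := ⟨1, by rw [map_zero]; exact cfauxWt.one⟩
      add_mem' := by
        rintro a b ⟨M, hM⟩ ⟨M', hM'⟩
        exact ⟨M * M', by rw [map_add]; exact hM.mul hM'⟩
      neg_mem' := by
        rintro a ⟨M, hM⟩
        exact ⟨M⁻¹, by rw [map_neg]; exact hM.inv⟩ }
  have hG : ∀ x, x ∈ G := by
    intro x
    have : x = ∑ j, (x j).val • (Pi.single j 1 : Fin n → ZMod N) := by
      ext i
      rw [Finset.sum_apply, Finset.sum_eq_single i]
      · simp
      · intro b _ hb; simp [hb.symm]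
      · simp
    rw [this]
    exact G.sum_mem fun j _ => G.nsmul_mem ⟨U j, hUU j⟩ _
  have hM : ∀ c : L.range, ∃ M : (Module.End ℂ V)ˣ, cfauxWt e U c M := by
    rintro ⟨c, x, rfl⟩
    exact hG x
  choose M hM using hM
  have hcomm : ∀ T, cfauxWt e U 0 T → ∃ c : ℂ, T = c • 1 := by
    intro T hT
    apply cfaux_schur ρ hρ
    have hi : ∀ i, T * U i = U i * T := by
      intro i; simpa using hT i
    have hc : ∀ a, ρ a ∈ Subalgebra.centralizer ℂ {T} := by
      apply cfaux_gen
      · intro i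
        rw [Subalgebra.mem_centralizer_iff]
        rintro _ rfl
        exact hi i
      · intro i
        rw [Subalgebra.mem_centralizer_iff]
        rintro _ rfl
        rw [← hUI]
        have hc : Commute _ (U i : Module.End ℂ V) := hi i
        exact hc.units_inv_right
    intro a
    exact (Subalgebra.mem_centralizer_iff ℂ).1 (hc a) T rfl
  have hone : ∀ (c : L.range) T, cfauxWt e U c T →
      T ∈ Submodule.span ℂ (Set.range fun c => (M c : Module.End ℂ V)) := by
    intro c T hT
    have h := (hM c).inv.mul hT
    rw [neg_add_cancel] at h
    obtain ⟨k, hk⟩ := hcomm _ h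
    have : T = k • (M c : Module.End ℂ V) := by
      have h2 := congrArg (fun f => (M c : Module.End ℂ V) * f) hk
      simpa [← mul_assoc] using h2
    rw [this]
    exact Submodule.smul_mem _ _ (Submodule.subset_span ⟨c, rfl⟩)
  let B : Subalgebra ℂ (Module.End ℂ V) :=
    (Submodule.span ℂ (Set.range fun c => (M c : Module.End ℂ V))).toSubalgebra
      (hone 0 1 cfauxWt.one) (by
        intro x y hx hy
        induction hx, hy using Submodule.span_induction₂ with
        | mem_mem x y hx hy =>
          obtain ⟨c, rfl⟩ := hx
          obtain ⟨d, rfl⟩ := hy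
          exact hone (c + d) _ ((hM c).mul (hM d))
        | zero_left y hy => simp
        | zero_right x hx => simp
        | add_left x y z _ _ _ h1 h2 => rw [add_mul]; exact Submodule.add_mem _ h1 h2
        | add_right x y z _ _ _ h1 h2 => rw [mul_add]; exact Submodule.add_mem _ h1 h2
        | smul_left r x y _ _ h => rw [smul_mul_assoc]; exact Submodule.smul_mem _ _ h
        | smul_right r x y _ _ h => rw [mul_smul_comm]; exact Submodule.smul_mem _ _ h)
  have hB : ∀ a, ρ a ∈ B := by
    apply cfaux_gen
    · intro i
      exact hone ⟨_, _, rfl⟩ _ (hUU i)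
    · intro i
      exact hone (-⟨_, _, rfl⟩) _ (hUU i).inv
  have hspan : ⊤ ≤ Submodule.span ℂ (Set.range fun c => (M c : Module.End ℂ V)) := by
    intro T _
    obtain ⟨a, rfl⟩ := cfaux_burnside ρ hρ T
    exact hB a
  have hli : LinearIndependent ℂ (fun c => (M c : Module.End ℂ V)) := by
    rw [Fintype.linearIndependent_iff]
    intro k hk c
    have h1 := congrArg (fun f => LinearMap.trace ℂ V ((↑(M c)⁻¹ : Module.End ℂ V) * f)) hk
    simp only [Finset.mul_sum, map_sum, mul_smul_comm, map_smul, mul_zero, map_zero] at h1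
    rw [Finset.sum_eq_single c] at h1
    · rw [Units.inv_mul, LinearMap.trace_one, smul_eq_mul] at h1
      obtain ⟨⟨v, hv⟩, -⟩ := hρ
      haveI : Nontrivial V := ⟨⟨v, 0, hv⟩⟩
      have : (Module.finrank ℂ V : ℂ) ≠ 0 := by
        exact_mod_cast (Module.finrank_pos (R := ℂ) (M := V)).ne'
      exact (mul_eq_zero.1 h1).resolve_right this
    · intro d _ hd
      rw [((hM c).inv.mul (hM d)).trace_zero he, smul_zero]
      intro h
      apply hd
      ext1
      exact (neg_add_eq_zero.1 h).symm
    · simp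
  have hb := Module.finrank_eq_card_basis (Module.Basis.mk hli hspan)
  rw [Nat.card_eq_fintype_card, ← hb, Module.finrank_linearMap]

section Kernel
variable {g p n : ℕ} (T : IdealTriangulation g p n)

theorem cfaux_sum_edge {R : Type*} [AddCommMonoid R] (d : T.D) (f : T.D → R) :
    ∑ d' with T.edge d' = T.edge d, f d' = f d + f (T.α d) := by
  have : (Finset.univ.filter fun d' => T.edge d' = T.edge d) = {d, T.α d} := by
    ext d'
    simp only [Finset.mem_filter, Finset.mem_univ, true_and, Finset.mem_insert,
      Finset.mem_singleton]
    rw [eq_comm, T.edge_fiber]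
  rw [this, Finset.sum_pair (T.α_fpf d).symm]

theorem cfaux_L {R : Type*} [CommRing R] (x : Fin n → R) (d : T.D) :
    ∑ j, (T.wpMatrix j (T.edge d) : R) * x j =
      x (T.edge (T.φ (T.φ d))) - x (T.edge (T.φ d))
      + (x (T.edge (T.φ (T.φ (T.α d)))) - x (T.edge (T.φ (T.α d)))) := by
  rw [← cfaux_sum_edge T d (fun d => x (T.edge (T.φ (T.φ d))) - x (T.edge (T.φ d)))]
  rw [Finset.sum_sub_distrib]
  simp only [IdealTriangulation.wpMatrix, Matrix.of_apply, Int.cast_sub, Int.cast_natCast, sub_mul,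
    Finset.sum_sub_distrib]
  congr 1
  · rw [Finset.sum_filter, ← Equiv.sum_comp T.φ]
    simp only [T.φ_triangles, IdealTriangulation.spikeCount, Finset.card_filter, Nat.cast_sum,
      Finset.sum_mul]
    rw [Finset.sum_comm]
    refine Finset.sum_congr rfl fun d' _ => ?_
    rw [Finset.sum_eq_single (T.edge d')]
    · split_ifs <;> simp_all
    · intro b _ hb; simp [hb.symm]
    · simp
  · rw [Finset.sum_filter]
    simp only [IdealTriangulation.spikeCount, Finset.card_filter, Nat.cast_sum,
      Finset.sum_mul]
    rw [Finset.sum_comm]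
    refine Finset.sum_congr rfl fun d' _ => ?_
    rw [Finset.sum_eq_single (T.edge (T.φ d'))]
    · split_ifs <;> simp_all
    · intro b _ hb; simp [hb.symm]
    · simp

theorem cfaux_ker {R : Type*} [CommRing R] (h : R) (hh : h * 2 = 1)
    (L : (Fin n → R) →+ (Fin n → R))
    (hL : ∀ x i, L x i = ∑ j, (T.wpMatrix j i : R) * x j) :
    Nat.card L.ker = Nat.card (Fin p → R) := by
  classical
  let F : (Fin p → R) → (Fin n → R) := fun w i => ∑ d with T.edge d = i, w (T.vert d)
  have hva : ∀ d, T.vert (T.α d) = T.vert (T.φ d) := by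
    intro d
    rw [← T.vert_rot (T.α d), T.α_invol]
  have hF : ∀ w d, F w (T.edge d) = w (T.vert d) + w (T.vert (T.φ d)) := by
    intro w d
    rw [← hva]
    exact cfaux_sum_edge T d (fun d => w (T.vert d))
  have hea : ∀ d, T.edge (T.α d) = T.edge d := by
    intro d
    rw [eq_comm, T.edge_fiber]
    exact Or.inr rfl
  have hmem : ∀ w, F w ∈ L.ker := by
    intro w
    rw [AddMonoidHom.mem_ker]
    ext i
    obtain ⟨d, rfl⟩ := T.edge_surj i
    rw [hL, cfaux_L]
    simp only [hF, T.φ_triangles, T.vert_rot, hva, Pi.zero_apply]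
    ring
  symm
  refine Nat.card_congr (Equiv.ofBijective (fun w => (⟨F w, hmem w⟩ : L.ker)) ⟨?_, ?_⟩)
  · intro w w' hw
    have hw : F w = F w' := congrArg Subtype.val hw
    ext v
    obtain ⟨d, rfl⟩ := T.vert_surj v
    have h1 := congrFun hw (T.edge d)
    have h2 := congrFun hw (T.edge (T.φ d))
    have h3 := congrFun hw (T.edge (T.φ (T.φ d)))
    simp only [hF, T.φ_triangles] at h1 h2 h3
    linear_combination h * (h1 + h3 - h2) - (w (T.vert d) - w' (T.vert d)) * hh
  · rintro ⟨x, hx⟩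
    rw [AddMonoidHom.mem_ker] at hx
    let u : T.D → R := fun d =>
      h * (x (T.edge d) + x (T.edge (T.φ (T.φ d))) - x (T.edge (T.φ d)))
    have hu : ∀ d, u (T.φ (T.α d)) = u d := by
      intro d
      have h1 := congrFun hx (T.edge d)
      rw [hL, cfaux_L, Pi.zero_apply] at h1
      simp only [u, T.φ_triangles, hea]
      linear_combination -h * h1
    have huk : ∀ d d', T.vert d = T.vert d' → u d = u d' := by
      intro d d' hd
      obtain ⟨k, rfl⟩ := T.vert_orbit d d' hd
      clear hd
      induction k with
      | zero => rfl
      | succ k ih =>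
        rw [pow_succ', Equiv.Perm.mul_apply, ih]
        exact (hu _).symm
    refine ⟨fun v => u (Function.surjInv T.vert_surj v), ?_⟩
    ext i
    obtain ⟨d, rfl⟩ := T.edge_surj i
    change F (fun v => u (Function.surjInv T.vert_surj v)) (T.edge d) = x (T.edge d)
    refine (hF (fun v => u (Function.surjInv T.vert_surj v)) d).trans ?_
    have hc : ∀ d, u (Function.surjInv T.vert_surj (T.vert d)) = u d := fun d =>
      huk _ _ (Function.surjInv_eq T.vert_surj (T.vert d))
    simp only [hc]
    simp only [u, T.φ_triangles]
    linear_combination x (T.edge d) * hh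

end Kernel

end Helpers

/-- Let `q²` be a primitive `N`-th root of unity with `N` odd.  Every
irreducible finite-dimensional representation of the Chekhov–Fock algebra `𝒯_λ^q` of an ideal
triangulation of a genus `g` surface with `p` punctures has dimension `N^(3g+p-3)`. -/
theorem chekhovFock_irreducible_rep_dim_odd (g p n N : ℕ) (hp : 1 ≤ p)
    (hgp : g = 0 → 3 ≤ p) (hn : (n : ℤ) = 6 * g + 3 * p - 6)
    (T : IdealTriangulation g p n) (q : ℂ)
    (hN : Odd N) (hq : IsPrimitiveRoot (q ^ 2) N)
    (V : Type*) [AddCommGroup V] [Module ℂ V] [FiniteDimensional ℂ V]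
    (ρ : ChekhovFock T q →ₐ[ℂ] Module.End ℂ V) (hρ : IsIrreducibleRep ρ) :
    Module.finrank ℂ V = N ^ (3 * g + p - 3) := by
  haveI : NeZero N := ⟨by rintro rfl; simp at hN⟩
  have hζ := hq.pow_eq_one
  let e : AddChar (ZMod N) ℂ := AddChar.zmodChar N hζ
  have hq0 : q ≠ 0 := by
    rintro rfl
    simp [NeZero.ne N] at hζ
  have he : ∀ x, e x = 1 → x = 0 := by
    intro x hx
    rw [AddChar.zmodChar_apply] at hx
    have h := Nat.eq_zero_of_dvd_of_lt (hq.dvd_of_pow_eq_one _ hx) (ZMod.val_lt x)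
    exact (ZMod.val_eq_zero x).1 h
  have heq : ∀ k : ℤ, e (k : ZMod N) = q ^ (2 * k) := by
    intro k
    rw [zpow_mul]
    have h1 : e (1 : ZMod N) = q ^ (2 : ℤ) := by
      have := AddChar.zmodChar_apply' hζ 1
      rw [Nat.cast_one, pow_one] at this
      rw [this]
      norm_cast
    rw [← h1, ← AddChar.map_zsmul_eq_zpow]
    simp
  let L : (Fin n → ZMod N) →+ (Fin n → ZMod N) :=
    { toFun := fun x i => ∑ j, (T.wpMatrix j i : ZMod N) * x j
      map_zero' := by ext; simp
      map_add' := by intro x y; ext; simp [mul_add, Finset.sum_add_distrib] }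
  have hdim := cfaux_dim e he heq ρ hρ L (fun _ _ => rfl)
  obtain ⟨h, hh⟩ : ∃ h : ZMod N, h * 2 = 1 := by
    have := (ZMod.isUnit_iff_coprime 2 N).2 (Nat.coprime_two_left.2 hN)
    obtain ⟨b, hb⟩ := this.exists_left_inv
    exact ⟨b, by exact_mod_cast hb⟩
  have hker := cfaux_ker T h hh L (fun _ _ => rfl)
  have hcard : Nat.card L.ker * Nat.card L.range = N ^ n := by
    rw [← AddSubgroup.index_ker, AddSubgroup.card_mul_index]
    simp
  have hkp : Nat.card (Fin p → ZMod N) = N ^ p := by simp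
  rw [hker, hkp, ← hdim] at hcard
  have hk : n = p + 2 * (3 * g + p - 3) := by omega
  have hpos : 0 < N ^ p := Nat.pos_of_ne_zero (pow_ne_zero _ (NeZero.ne N))
  rw [hk, pow_add] at hcard
  have h2 := Nat.eq_of_mul_eq_mul_left hpos hcard
  rw [mul_comm 2, pow_mul, sq] at h2
  exact Nat.mul_self_inj.1 h2
end
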